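/- (Logarithmic Gronwall lemma) Let Y : [0,T] → [0,∞) be C¹ and satisfy dY/dt ≤ Y + Y ln⁺Y on [0,T], where ln⁺(x) = 1 for x < e and ln⁺(x) = ln x for x ≥ e. Set Y_e(t) := e + Y(t). Then Y_e(t) ≤ exp(ln(Y_e(0)) · exp(2t)) for all t ∈ [0,T]. -/

import Mathlib

/-!
Put `u := e + Y`. Where `Y < e`, the right-hand side `Y + Y ln⁺ Y` equals `2 Y`, and
`Y ≤ u - 1 ≤ u log u`; where `Y ≥ e`, both `1` and `log Y` are at most `log u`. In either case
`u' ≤ 2 u log u`, that is, `(log u)' ≤ 2 log u`, and the linear Gronwall inequality applies to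
`log u`.
-/

open Real Set

/-- `ln⁺(x) = 1` for `x < e` and `ln x` for `x ≥ e`. -/
noncomputable def lnPlus (x : ℝ) : ℝ := if x < Real.exp 1 then 1 else Real.log x

section Gronwall

variable {f f' : ℝ → ℝ} {a b K : ℝ}

theorem le_mul_exp_of_deriv_right_le_mul (hf : ContinuousOn f (Icc a b))
    (hf' : ∀ t ∈ Ico a b, HasDerivWithinAt f (f' t) (Ici t) t)
    (bound : ∀ t ∈ Ico a b, f' t ≤ K * f t) :
    ∀ t ∈ Icc a b, f t ≤ f a * exp (K * (t - a)) := by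
  intro t ht
  rw [← gronwallBound_ε0]
  exact le_gronwallBound_of_liminf_deriv_right_le hf
    (fun s hs _ hr => (hf' s hs).liminf_right_slope_le hr) le_rfl
    (fun s hs => (bound s hs).trans_eq (add_zero _).symm) t ht

theorem le_exp_log_mul_exp_of_deriv_right_le_mul_log (hf : ContinuousOn f (Icc a b))
    (hpos : ∀ t ∈ Icc a b, 0 < f t)
    (hf' : ∀ t ∈ Ico a b, HasDerivWithinAt f (f' t) (Ici t) t)
    (bound : ∀ t ∈ Ico a b, f' t ≤ K * (f t * log (f t))) :
    ∀ t ∈ Icc a b, f t ≤ exp (log (f a) * exp (K * (t - a))) := by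
  intro t ht
  have deriv_log_le : ∀ s ∈ Ico a b, f' s / f s ≤ K * log (f s) := fun s hs => by
    rw [div_le_iff₀ (hpos s (Ico_subset_Icc_self hs))]
    exact (bound s hs).trans_eq (by ring)
  rw [← log_le_iff_le_exp (hpos t ht)]
  exact le_mul_exp_of_deriv_right_le_mul (f := fun s => log (f s))
    (hf.log fun s hs => (hpos s hs).ne')
    (fun s hs => (hf' s hs).log (hpos s (Ico_subset_Icc_self hs)).ne') deriv_log_le t ht

end Gronwall

theorem self_add_mul_lnPlus_le {y : ℝ} (hy : -exp 1 ≤ y) :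
    y + y * lnPlus y ≤ 2 * ((exp 1 + y) * log (exp 1 + y)) := by
  have one_le_e : 1 ≤ exp 1 := one_le_exp zero_le_one
  rcases lt_or_ge y (exp 1) with hlt | hge
  · rw [lnPlus, if_pos hlt]
    linarith [self_sub_one_le_mul_log (neg_le_iff_add_nonneg'.1 hy)]
  · have y_le_add : y ≤ exp 1 + y := by linarith
    have one_le_log : 1 ≤ log (exp 1 + y) := (le_log_iff_exp_le (by linarith)).2 (by linarith)
    have log_le : log y ≤ log (exp 1 + y) := log_le_log (by linarith) y_le_add
    rw [lnPlus, if_neg hge.not_gt]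
    calc y + y * log y
        = y * (1 + log y) := by ring
      _ ≤ y * (2 * log (exp 1 + y)) := mul_le_mul_of_nonneg_left (by linarith) (by linarith)
      _ ≤ (exp 1 + y) * (2 * log (exp 1 + y)) := mul_le_mul_of_nonneg_right y_le_add (by linarith)
      _ = 2 * ((exp 1 + y) * log (exp 1 + y)) := by ring

theorem log_gronwall_general {Y Y' : ℝ → ℝ} {a b : ℝ}
    (hcont : ContinuousOn Y (Icc a b))
    (hderiv : ∀ t ∈ Ico a b, HasDerivWithinAt Y (Y' t) (Ici t) t)
    (hlower : ∀ t ∈ Icc a b, -exp 1 < Y t)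
    (hineq : ∀ t ∈ Ico a b, Y' t ≤ Y t + Y t * lnPlus (Y t)) :
    ∀ t ∈ Icc a b, exp 1 + Y t ≤ exp (log (exp 1 + Y a) * exp (2 * (t - a))) :=
  le_exp_log_mul_exp_of_deriv_right_le_mul_log (f := fun t => exp 1 + Y t)
    (continuousOn_const.add hcont)
    (fun t ht => neg_lt_iff_pos_add'.1 (hlower t ht))
    (fun t ht => (hderiv t ht).const_add (exp 1))
    (fun t ht => (hineq t ht).trans
      (self_add_mul_lnPlus_le (hlower t (Ico_subset_Icc_self ht)).le))

/-- Logarithmic Gronwall lemma: if `Y : [0,T] → [0,∞)` is `C¹` and satisfies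
`dY/dt ≤ Y + Y ln⁺ Y` on `[0,T]`, then with `Y_e := e + Y`,
`Y_e(t) ≤ exp(ln(Y_e(0)) · exp(2t))` for all `t ∈ [0,T]`. -/
theorem log_gronwall (T : ℝ) (hT : 0 < T) (Y Y' : ℝ → ℝ)
    (hderiv : ∀ t ∈ Icc 0 T, HasDerivAt Y (Y' t) t)
    (hY'cont : ContinuousOn Y' (Icc 0 T))
    (hYnonneg : ∀ t ∈ Icc 0 T, 0 ≤ Y t)
    (hineq : ∀ t ∈ Icc 0 T, Y' t ≤ Y t + Y t * lnPlus (Y t)) :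
    ∀ t ∈ Icc 0 T,
      Real.exp 1 + Y t ≤ Real.exp (Real.log (Real.exp 1 + Y 0) * Real.exp (2 * t)) := by
  simpa only [sub_zero] using log_gronwall_general
    (fun t ht => (hderiv t ht).continuousAt.continuousWithinAt)
    (fun t ht => (hderiv t (Ico_subset_Icc_self ht)).hasDerivWithinAt)
    (fun t ht => (neg_neg_of_pos (exp_pos 1)).trans_le (hYnonneg t ht))
    (fun t ht => hineq t (Ico_subset_Icc_self ht))
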